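/- arXiv:1412.0628 — 2 statements merged into one kernel-verified Lean document; each statement's English description precedes it below -/
import Mathlib

section
/- For every integer k ≥ 4 and every integer n ≥ 3, in the k-regular graph game starting from the empty graph on n vertices, the second player has a strategy ensuring that the final graph contains a Hamiltonian cycle (a cycle passing through all n vertices). -/
/-!
The second player grows a single path through all non-isolated vertices and closes it at the end.

The invariant kept after each of the second player's moves (once the game has started) is: some path
covers every vertex of positive degree, and its two distinct ends have degrees at most `2` and at
most `1`. The first player's next edge falls into one of these cases.

* It leaves a path covering all non-isolated vertices with end degrees at most `3` and `2`
  (`Position k 3 2`): both endpoints of the edge lie on the path, or the edge prolongs the path.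
  Then the second player joins the end of degree at most `3 < k` to an isolated vertex, which
  becomes an end of degree `1`. If there is no isolated vertex, the path is Hamiltonian, and the
  second player joins its ends unless they are already adjacent (`Position.respond`).
* It joins an inner vertex of the path to an isolated vertex `x`. The second player joins `x` to
  the end of degree at most `2`, and `x` becomes an end of degree `2`.
* It joins two isolated vertices `x`, `y`. The second player joins `x` to the end of degree at most
  `2`, and `y` becomes an end of degree `1`.

So the invariant persists until a Hamiltonian cycle appears, and a position satisfying it cannot be
terminal without having one. The strategy is positional: choose any legal move that leads to a
position satisfying the invariant, if there is one.
-/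

open SimpleGraph

namespace GraphGame

/-- The degree of a vertex, defined via the cardinality of its neighbor set. -/
noncomputable def deg {V : Type} (G : SimpleGraph V) (v : V) : ℕ :=
  (G.neighborSet v).ncard

/-- The graph obtained from `G` by adding the edge between `u` and `v`. -/
def addEdge {V : Type} (G : SimpleGraph V) (u v : V) : SimpleGraph V :=
  G ⊔ SimpleGraph.fromEdgeSet {s(u, v)}

/-- A legal move in the `k`-regular graph game: draw an edge between two distinct
non-adjacent vertices, so that afterwards every vertex still has degree at most `k`. -/
def LegalMove {V : Type} (k : ℕ) (G : SimpleGraph V) (u v : V) : Prop :=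
  u ≠ v ∧ ¬ G.Adj u v ∧ ∀ w, deg (addEdge G u v) w ≤ k

/-- A position is terminal when no legal move remains. -/
def Terminal {V : Type} (k : ℕ) (G : SimpleGraph V) : Prop :=
  ∀ u v, ¬ LegalMove k G u v

/-- A strategy (a choice of an edge to draw at every position) is valid if it assigns a
legal move to every non-terminal position. -/
def ValidStrategy {V : Type} (k : ℕ) (s : SimpleGraph V → V × V) : Prop :=
  ∀ G : SimpleGraph V, ¬ Terminal k G → LegalMove k G (s G).1 (s G).2

/-- `IsPlay k r s G₀ g` : `g` is a play of the `k`-regular graph game starting from `G₀`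
in which the player moving at steps `i` with `i % 2 = r` (so `r = 0` for the first player
and `r = 1` for the second player) follows the strategy `s`, and the opponent moves
arbitrarily (legally).  Once a terminal position is reached the sequence stays constant. -/
def IsPlay {V : Type} (k r : ℕ) (s : SimpleGraph V → V × V) (G₀ : SimpleGraph V)
    (g : ℕ → SimpleGraph V) : Prop :=
  g 0 = G₀ ∧ ∀ i : ℕ,
    (Terminal k (g i) → g (i + 1) = g i) ∧
    (¬ Terminal k (g i) →
      (i % 2 = r → g (i + 1) = addEdge (g i) (s (g i)).1 (s (g i)).2) ∧
      (i % 2 ≠ r → ∃ u v, LegalMove k (g i) u v ∧ g (i + 1) = addEdge (g i) u v))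

/-- The player moving at steps `≡ r (mod 2)` has a strategy ensuring that the final graph
(i.e. the terminal graph reached at the end of every play) satisfies `P`. -/
def Ensures {V : Type} (k r : ℕ) (G₀ : SimpleGraph V) (P : SimpleGraph V → Prop) : Prop :=
  ∃ s : SimpleGraph V → V × V, ValidStrategy k s ∧
    ∀ g : ℕ → SimpleGraph V, IsPlay k r s G₀ g →
      ∀ n, Terminal k (g n) → P (g n)

/-- The player moving at steps `≡ r (mod 2)` has a strategy forcing the event that at some
stage the current graph satisfies `P`. -/
def Forces {V : Type} (k r : ℕ) (G₀ : SimpleGraph V) (P : SimpleGraph V → Prop) : Prop :=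
  ∃ s : SimpleGraph V → V × V, ValidStrategy k s ∧
    ∀ g : ℕ → SimpleGraph V, IsPlay k r s G₀ g → ∃ n, P (g n)

end GraphGame

namespace GraphGame

/-! ### Degrees and adjacency after adding an edge -/

section Basic

variable {V : Type} {G : SimpleGraph V} {u v w : V}

lemma le_addEdge (G : SimpleGraph V) (u v : V) : G ≤ addEdge G u v := le_sup_left

lemma addEdge_comm (G : SimpleGraph V) (u v : V) : addEdge G u v = addEdge G v u := by
  rw [addEdge, addEdge, Sym2.eq_swap]

lemma addEdge_adj (h : u ≠ v) : (addEdge G u v).Adj u v := by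
  simp [addEdge, h]

lemma deg_addEdge_of_ne (hu : w ≠ u) (hv : w ≠ v) : deg (addEdge G u v) w = deg G w := by
  unfold deg
  congr 1
  ext z
  simp [addEdge, hu, hv]

lemma deg_addEdge_left_le [Finite V] : deg (addEdge G u v) u ≤ deg G u + 1 := by
  unfold deg
  refine (Set.ncard_le_ncard (t := insert v (G.neighborSet u)) ?_).trans (Set.ncard_insert_le _ _)
  intro z hz
  simp only [addEdge, mem_neighborSet, sup_adj, fromEdgeSet_adj, Set.mem_singleton_iff,
    Sym2.eq_iff, Set.mem_insert_iff] at hz ⊢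
  grind

lemma deg_addEdge_right_le [Finite V] : deg (addEdge G u v) v ≤ deg G v + 1 := by
  rw [addEdge_comm]
  exact deg_addEdge_left_le

lemma deg_addEdge_le [Finite V] : deg (addEdge G u v) w ≤ deg G w + 1 := by
  by_cases hu : w = u
  · subst hu; exact deg_addEdge_left_le
  by_cases hv : w = v
  · subst hv; exact deg_addEdge_right_le
  rw [deg_addEdge_of_ne hu hv]
  exact Nat.le_succ _

lemma not_adj_of_deg_eq_zero [Finite V] (h : deg G u = 0) : ¬ G.Adj u v := by
  intro hadj
  rw [deg, Set.ncard_eq_zero] at h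
  exact (h ▸ (show v ∈ G.neighborSet u from hadj) : v ∈ (∅ : Set V))

lemma legalMove_of_deg_lt [Finite V] {k : ℕ} (hG : ∀ w, deg G w ≤ k) (h : u ≠ v)
    (hadj : ¬ G.Adj u v) (hu : deg G u < k) (hv : deg G v < k) : LegalMove k G u v := by
  refine ⟨h, hadj, fun w => ?_⟩
  by_cases hwu : w = u
  · subst hwu; exact deg_addEdge_left_le.trans hu
  by_cases hwv : w = v
  · subst hwv; exact deg_addEdge_right_le.trans hv
  rw [deg_addEdge_of_ne hwu hwv]
  exact hG w

lemma LegalMove.symm {k : ℕ} (h : LegalMove k G u v) : LegalMove k G v u :=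
  ⟨h.1.symm, fun e => h.2.1 e.symm, by rw [addEdge_comm]; exact h.2.2⟩

end Basic

/-! ### Paths with a prescribed vertex set -/

section Paths

variable {V : Type} {G G' : SimpleGraph V} {a b x : V} {S : Set V}

/-- `G` has a path from `a` to `b` whose vertex set is exactly `S`. -/
def HasPath (G : SimpleGraph V) (a b : V) (S : Set V) : Prop :=
  ∃ p : G.Walk a b, p.IsPath ∧ ∀ w, w ∈ p.support ↔ w ∈ S

lemma HasPath.mono (h : G ≤ G') (hp : HasPath G a b S) : HasPath G' a b S := by
  obtain ⟨p, hp, hS⟩ := hp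
  exact ⟨p.mapLe h, hp.mapLe h, by simpa [Walk.support_mapLe_eq_support] using hS⟩

lemma HasPath.symm (hp : HasPath G a b S) : HasPath G b a S := by
  obtain ⟨p, hp, hS⟩ := hp
  exact ⟨p.reverse, hp.reverse, by simpa using hS⟩

lemma HasPath.cons (hp : HasPath G a b S) (hx : x ∉ S) (hadj : G.Adj x a) :
    HasPath G x b (insert x S) := by
  obtain ⟨p, hp, hS⟩ := hp
  exact ⟨p.cons hadj, hp.cons (by rwa [hS]), by simp [hS]⟩

lemma HasPath.left_mem (hp : HasPath G a b S) : a ∈ S := by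
  obtain ⟨p, -, hS⟩ := hp
  exact (hS a).1 p.start_mem_support

lemma HasPath.right_mem (hp : HasPath G a b S) : b ∈ S := hp.symm.left_mem

/-- `G` contains a Hamiltonian cycle. -/
def Ham {n : ℕ} (G : SimpleGraph (Fin n)) : Prop :=
  ∃ (v : Fin n) (p : G.Walk v v), p.IsHamiltonianCycle

lemma Ham.mono {n : ℕ} {G G' : SimpleGraph (Fin n)} (h : G ≤ G') (hG : Ham G) : Ham G' := by
  obtain ⟨v, p, hp⟩ := hG
  exact ⟨v, p.mapLe h, hp.map (f := Hom.ofLE h) Function.bijective_id⟩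

/-- A Hamiltonian path whose ends are adjacent closes up to a Hamiltonian cycle. -/
lemma HasPath.ham {n : ℕ} (hn : 3 ≤ n) {G : SimpleGraph (Fin n)} {a b : Fin n}
    {S : Set (Fin n)} (hp : HasPath G a b S) (hS : ∀ w, w ∈ S) (hadj : G.Adj a b) : Ham G := by
  obtain ⟨p, hp, hpS⟩ := hp
  have hham : p.IsHamiltonian := hp.isHamiltonian_iff.2 fun w => (hpS w).2 (hS w)
  have hlen := hham.length_eq
  rw [Fintype.card_fin] at hlen
  refine ⟨b, p.cons hadj.symm, ?_, ?_⟩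
  · refine (Walk.cons_isCycle_iff _ _).2 ⟨hp, fun he => ?_⟩
    have := hp.length_eq_one_of_mem_edges (by rwa [Sym2.eq_swap])
    omega
  · simpa [Walk.IsHamiltonian] using hham

end Paths

/-! ### Positions and the second player's replies -/

section Positions

variable {n k : ℕ} {G : SimpleGraph (Fin n)}

/-- All degrees are at most `k`, and some path with two distinct ends, of degrees at most `i` and
at most `j`, covers all vertices of positive degree. -/
def Position (k i j : ℕ) (G : SimpleGraph (Fin n)) : Prop :=
  (∀ w, deg G w ≤ k) ∧ ∃ a b S, a ≠ b ∧ deg G a ≤ i ∧ deg G b ≤ j ∧ HasPath G a b S ∧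
    ∀ w, w ∉ S → deg G w = 0

/-- The invariant holding whenever the first player is to move. -/
def Safe (k : ℕ) (G : SimpleGraph (Fin n)) : Prop :=
  G = ⊥ ∨ Position k 2 1 G ∨ Ham G

/-- The invariant holding whenever the second player is to move: either the game is already
decided, or some legal move restores `Safe`. -/
def Good (k : ℕ) (G : SimpleGraph (Fin n)) : Prop :=
  Ham G ∨ ∃ u v, LegalMove k G u v ∧ Safe k (addEdge G u v)

/-- Joining an end of the path to an isolated vertex, or to the other end if there is no isolated
vertex, is an adequate reply of the second player. -/
lemma Position.respond (hn : 3 ≤ n) (hk : 4 ≤ k) (h : Position k 3 2 G) : Good k G := by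
  obtain ⟨hdeg, a, b, S, hab, ha, hb, hp, hS⟩ := h
  by_cases hall : ∀ w, w ∈ S
  · by_cases hadj : G.Adj a b
    · exact .inl (hp.ham hn hall hadj)
    · exact .inr ⟨a, b, legalMove_of_deg_lt hdeg hab hadj (by omega) (by omega),
        .inr (.inr ((hp.mono (le_addEdge G a b)).ham hn hall (addEdge_adj hab)))⟩
  · push Not at hall
    obtain ⟨x, hx⟩ := hall
    have hxa : x ≠ a := fun e => hx (e ▸ hp.left_mem)
    have hxb : x ≠ b := fun e => hx (e ▸ hp.right_mem)
    have hx0 := hS x hx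
    have hleg : LegalMove k G x a :=
      legalMove_of_deg_lt hdeg hxa (not_adj_of_deg_eq_zero hx0) (by omega) (by omega)
    -- The new end `x` has degree `1`, so the ends are listed in the opposite order.
    refine .inr ⟨x, a, hleg, .inr (.inl ⟨hleg.2.2, b, x, insert x S, hxb.symm, ?_, ?_,
      ((hp.mono (le_addEdge G x a)).cons hx (addEdge_adj hxa)).symm, fun w hw => ?_⟩)⟩
    · rwa [deg_addEdge_of_ne hxb.symm hab.symm]
    · exact deg_addEdge_left_le.trans (by omega)
    · rw [Set.mem_insert_iff, not_or] at hw
      rw [deg_addEdge_of_ne hw.1 fun e => hw.2 (e ▸ hp.left_mem)]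
      exact hS w hw.2

/-- The second player's reply when the first player's edge `xy` has an isolated endpoint `x` and the
other endpoint `y` is not an end of the path. -/
lemma good_of_addEdge_isolated (hk : 4 ≤ k) {a b x y : Fin n} {S : Set (Fin n)}
    (hab : a ≠ b) (ha : deg G a ≤ 2) (hb : deg G b ≤ 1) (hp : HasPath G a b S)
    (hS : ∀ w, w ∉ S → deg G w = 0) (hxy : LegalMove k G x y) (hx : x ∉ S)
    (hya : y ≠ a) (hyb : y ≠ b) : Good k (addEdge G x y) := by
  have hxa : x ≠ a := fun e => hx (e ▸ hp.left_mem)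
  have hxb : x ≠ b := fun e => hx (e ▸ hp.right_mem)
  have hx0 := hS x hx
  have hp' := hp.mono (le_addEdge G x y)
  have ha' : deg (addEdge G x y) a = deg G a := deg_addEdge_of_ne hxa.symm hya.symm
  have hb' : deg (addEdge G x y) b = deg G b := deg_addEdge_of_ne hxb.symm hyb.symm
  have hx' : deg (addEdge G x y) x ≤ 1 := deg_addEdge_left_le.trans (by omega)
  have hnadj : ¬ (addEdge G x y).Adj x a := by
    have := not_adj_of_deg_eq_zero (v := a) hx0
    simp only [addEdge, sup_adj, fromEdgeSet_adj, Set.mem_singleton_iff, Sym2.eq_iff]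
    grind
  have hleg : LegalMove k (addEdge G x y) x a :=
    legalMove_of_deg_lt hxy.2.2 hxa hnadj (by omega) (by omega)
  have hp2 : HasPath (addEdge (addEdge G x y) x a) x b (insert x S) :=
    (hp'.mono (le_addEdge _ x a)).cons hx (addEdge_adj hxa)
  have hb2 : deg (addEdge (addEdge G x y) x a) b ≤ 1 := by
    rw [deg_addEdge_of_ne hxb.symm hab.symm, hb']
    exact hb
  refine .inr ⟨x, a, hleg, .inr (.inl ⟨hleg.2.2, ?_⟩)⟩
  by_cases hy : y ∈ S
  · refine ⟨x, b, insert x S, hxb, deg_addEdge_left_le.trans (by omega), hb2, hp2, fun w hw => ?_⟩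
    rw [Set.mem_insert_iff, not_or] at hw
    rw [deg_addEdge_of_ne hw.1 fun e => hw.2 (e ▸ hp.left_mem),
      deg_addEdge_of_ne hw.1 fun e => hw.2 (e ▸ hy)]
    exact hS w hw.2
  · have hyx : y ≠ x := hxy.1.symm
    refine ⟨y, b, insert y (insert x S), hyb, ?_, hb2,
      hp2.cons (by simp [hyx, hy]) (le_addEdge _ x a (addEdge_adj hxy.1).symm), fun w hw => ?_⟩
    · rw [deg_addEdge_of_ne hyx hya]
      exact deg_addEdge_right_le.trans (by rw [hS y hy]; omega)
    · simp only [Set.mem_insert_iff, not_or] at hw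
      rw [deg_addEdge_of_ne hw.2.1 fun e => hw.2.2 (e ▸ hp.left_mem),
        deg_addEdge_of_ne hw.2.1 hw.1]
      exact hS w hw.2.2

/-- If the first player's edge `xy` has an isolated endpoint `x`, the position is good: either the
edge prolongs the path, or the previous lemma applies. -/
lemma good_of_addEdge_not_mem (hn : 3 ≤ n) (hk : 4 ≤ k) {a b x y : Fin n} {S : Set (Fin n)}
    (hab : a ≠ b) (ha : deg G a ≤ 2) (hb : deg G b ≤ 1) (hp : HasPath G a b S)
    (hS : ∀ w, w ∉ S → deg G w = 0) (hxy : LegalMove k G x y) (hx : x ∉ S) :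
    Good k (addEdge G x y) := by
  have hxa : x ≠ a := fun e => hx (e ▸ hp.left_mem)
  have hxb : x ≠ b := fun e => hx (e ▸ hp.right_mem)
  have hx' : deg (addEdge G x y) x ≤ 1 := deg_addEdge_left_le.trans (by rw [hS x hx])
  have hp' := hp.mono (le_addEdge G x y)
  have hrest : y ∈ S → ∀ w, w ∉ insert x S → deg (addEdge G x y) w = 0 := by
    intro hy w hw
    rw [Set.mem_insert_iff, not_or] at hw
    rw [deg_addEdge_of_ne hw.1 fun e => hw.2 (e ▸ hy)]
    exact hS w hw.2
  by_cases hya : y = a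
  · subst hya
    refine Position.respond hn hk ⟨hxy.2.2, x, b, insert x S, hxb, by omega, ?_,
      hp'.cons hx (addEdge_adj hxy.1), hrest hp.left_mem⟩
    rw [deg_addEdge_of_ne hxb.symm hab.symm]
    omega
  by_cases hyb : y = b
  · subst hyb
    refine Position.respond hn hk ⟨hxy.2.2, x, a, insert x S, hxa, by omega, ?_,
      hp'.symm.cons hx (addEdge_adj hxy.1), hrest hp.right_mem⟩
    rwa [deg_addEdge_of_ne hxa.symm hab]
  exact good_of_addEdge_isolated hk hab ha hb hp hS hxy hx hya hyb

/-- After any legal move of the first player from a safe position, the position is good. -/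
lemma Safe.good_addEdge (hn : 3 ≤ n) (hk : 4 ≤ k) (h : Safe k G) {u v : Fin n}
    (huv : LegalMove k G u v) : Good k (addEdge G u v) := by
  rcases h with rfl | ⟨-, a, b, S, hab, ha, hb, hp, hS⟩ | h
  · -- The first edge of the game is itself the path.
    have hbot : ∀ w, deg (⊥ : SimpleGraph (Fin n)) w = 0 := by simp [deg]
    have hu := deg_addEdge_left_le (G := ⊥) (u := u) (v := v)
    have hv := deg_addEdge_right_le (G := ⊥) (u := u) (v := v)
    rw [hbot] at hu hv
    have hnil : HasPath (addEdge ⊥ u v) v v {v} := ⟨.nil, .nil, by simp⟩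
    refine Position.respond hn hk ⟨huv.2.2, u, v, insert u {v}, huv.1, by omega, by omega,
      hnil.cons (by simpa using huv.1) (addEdge_adj huv.1), fun w hw => ?_⟩
    simp only [Set.mem_insert_iff, Set.mem_singleton_iff, not_or] at hw
    rw [deg_addEdge_of_ne hw.1 hw.2, hbot]
  · by_cases hu : u ∈ S
    · by_cases hv : v ∈ S
      · refine Position.respond hn hk ⟨huv.2.2, a, b, S, hab, deg_addEdge_le.trans (by omega),
          deg_addEdge_le.trans (by omega), hp.mono (le_addEdge G u v), fun w hw => ?_⟩
        rw [deg_addEdge_of_ne (ne_of_mem_of_not_mem hu hw).symm (ne_of_mem_of_not_mem hv hw).symm]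
        exact hS w hw
      · rw [addEdge_comm]
        exact good_of_addEdge_not_mem hn hk hab ha hb hp hS huv.symm hv
    · exact good_of_addEdge_not_mem hn hk hab ha hb hp hS huv hu
  · exact .inl (h.mono (le_addEdge G u v))

lemma Good.ham_of_terminal (h : Good k G) (ht : Terminal k G) : Ham G :=
  h.resolve_right fun ⟨u, v, huv, _⟩ => ht u v huv

/-- `Position k 2 1` is stronger than `Position k 3 2`, where a legal move exists unless there is a
Hamiltonian cycle. -/
lemma Safe.ham_of_terminal (hn : 3 ≤ n) (hk : 4 ≤ k) (h : Safe k G) (ht : Terminal k G) :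
    Ham G := by
  rcases h with rfl | ⟨hdeg, a, b, S, hab, ha, hb, hp, hS⟩ | h
  · have hbot : ∀ w, deg (⊥ : SimpleGraph (Fin n)) w = 0 := by simp [deg]
    refine absurd (legalMove_of_deg_lt (k := k) (u := ⟨0, by omega⟩) (v := ⟨1, by omega⟩)
      (fun w => ?_) (by rw [Ne, Fin.mk.injEq]; omega) (by simp) ?_ ?_) (ht _ _)
    all_goals rw [hbot]; omega
  · exact (Position.respond hn hk
      ⟨hdeg, a, b, S, hab, by omega, by omega, hp, hS⟩).ham_of_terminal ht
  · exact h

end Positions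

end GraphGame

open GraphGame in
/-- For every integer `k ≥ 4` and every `n ≥ 3`, in the `k`-regular graph game starting
from the empty graph on `n` vertices, the second player has a strategy ensuring that
the final graph contains a Hamiltonian cycle. -/
theorem second_player_can_force_hamiltonicity (k n : ℕ) (hk : 4 ≤ k) (hn : 3 ≤ n) :
    Ensures k 1 (⊥ : SimpleGraph (Fin n))
      (fun G => ∃ (v : Fin n) (p : G.Walk v v), p.IsHamiltonianCycle) := by
  classical
  -- A legal move into a safe position where possible, any legal move otherwise.
  have hex : ∀ G : SimpleGraph (Fin n), ∃ m : Fin n × Fin n, ¬ Terminal k G →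
      LegalMove k G m.1 m.2 ∧ (Good k G → Safe k (addEdge G m.1 m.2)) := by
    intro G
    by_cases ht : Terminal k G
    · exact ⟨(⟨0, by omega⟩, ⟨0, by omega⟩), fun h => absurd ht h⟩
    by_cases hG : ∃ u v, LegalMove k G u v ∧ Safe k (addEdge G u v)
    · obtain ⟨u, v, huv, hs⟩ := hG
      exact ⟨(u, v), fun _ => ⟨huv, fun _ => hs⟩⟩
    · simp only [Terminal, not_forall, not_not] at ht
      obtain ⟨u, v, huv⟩ := ht
      exact ⟨(u, v), fun _ => ⟨huv, fun h =>
        .inr (.inr ((h.resolve_right hG).mono (le_addEdge G u v)))⟩⟩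
  choose s hs using hex
  refine ⟨s, fun G hG => (hs G hG).1, fun g ⟨h0, hstep⟩ => ?_⟩
  have hinv : ∀ i, (i % 2 = 0 → Safe k (g i)) ∧ (i % 2 = 1 → Good k (g i)) := by
    intro i
    induction i with
    | zero => exact ⟨fun _ => .inl h0, by simp⟩
    | succ i ih =>
      obtain ⟨hterm, hmove⟩ := hstep i
      by_cases ht : Terminal k (g i)
      · -- A terminal position repeats at both parities, and it has a Hamiltonian cycle.
        have hham : Ham (g i) := by
          rcases Nat.mod_two_eq_zero_or_one i with hi | hi
          · exact (ih.1 hi).ham_of_terminal hn hk ht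
          · exact (ih.2 hi).ham_of_terminal ht
        rw [hterm ht]
        exact ⟨fun _ => .inr (.inr hham), fun _ => .inl hham⟩
      · obtain ⟨hme, hopp⟩ := hmove ht
        constructor
        · intro hi
          have hi' : i % 2 = 1 := by omega
          rw [hme hi']
          exact (hs _ ht).2 (ih.2 hi')
        · intro hi
          have hi' : i % 2 = 0 := by omega
          obtain ⟨u, v, huv, hg⟩ := hopp (by omega)
          rw [hg]
          exact (ih.1 hi').good_addEdge hn hk huv
  intro m ht
  rcases Nat.mod_two_eq_zero_or_one m with hm | hm
  · exact ((hinv m).1 hm).ham_of_terminal hn hk ht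
  · exact ((hinv m).2 hm).ham_of_terminal ht
end

section
/- Let G be a finite simple graph with maximum degree at most 3 and let x be a non-isolated vertex of G. Let C be the connected component of x in G, and let D be the union of the connected components of G other than C that contain at least one edge. Let G₁ = G + e₁, where e₁ joins two distinct non-adjacent vertices of C each of degree at most 2 in G, and let G₂ = G₁ + e₂, where e₂ joins two distinct non-adjacent vertices each of degree at most 2 in G₁. Let C₂ be the connected component of x in G₂ and let D₂ be the union of the components of G₂ other than C₂ that contain at least one edge. Then F(C₂) + E(D₂) ≤ F(C) + E(D), with equality if and only if both endpoints of e₂ are isolated vertices of G₁. -/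
/-!
Write `w 0 = 2` and `w d = 3 - d` for `d > 0`, and let
`Ψ(G) = ∑ v, w (deg v) - 2 * #components(G)`. Grouping the sum by components, an isolated vertex
contributes `2 - 2 = 0` and a component with an edge contributes `F - 2`, so for non-isolated `x`
one has `F(C) + E(D) = Ψ(G) + 2` (`Fdof_add_Edof`), an expression independent of `x`.

Adding an edge `uv` lowers the vertex sum by one for each endpoint that is not isolated, because
`w 1 = w 0` (`sum_weight_addEdge`); it lowers the number of components by at most one, by none if
`u` and `v` were already connected, and by at least one if they were not. Hence `e₁` changes `Ψ` by
exactly `-2`, and `e₂` changes it by at most `2` minus the number of its non-isolated endpoints.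
When both endpoints are isolated they lie in different components and the change is exactly `2`.
-/

open SimpleGraph

/-- The degree of a vertex, defined via the cardinality of its neighbor set. -/
noncomputable def deg {V : Type} (G : SimpleGraph V) (v : V) : ℕ :=
  (G.neighborSet v).ncard

/-- The graph obtained from `G` by adding the edge between `u` and `v`. -/
def addEdge {V : Type} (G : SimpleGraph V) (u v : V) : SimpleGraph V :=
  G ⊔ SimpleGraph.fromEdgeSet {s(u, v)}

/-- The degrees of freedom of a set `A` of vertices: `F(A) = Σ_{v ∈ A} (3 - deg v)`,
degrees taken in the ambient graph. -/
noncomputable def Fdof {V : Type} (G : SimpleGraph V) (A : Set V) : ℤ :=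
  ∑ᶠ v ∈ A, (3 - (deg G v : ℤ))

/-- The effective degrees of freedom of a union `D` of connected components:
`E(D) = Σᵢ (F(Dⁱ) - 2)`, the sum ranging over the connected components contained in `D`. -/
noncomputable def Edof {V : Type} (G : SimpleGraph V) (D : Set V) : ℤ :=
  ∑ᶠ c ∈ {c : G.ConnectedComponent | c.supp ⊆ D}, (Fdof G c.supp - 2)

/-- The contribution of a vertex of degree `d` to the potential: its degrees of freedom `3 - d`,
except that an isolated vertex counts `2`, cancelling the `-2` of its own component. -/
def weight (d : ℕ) : ℤ := if d = 0 then 2 else 3 - d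

/-- `∑ v, weight (deg v)` minus twice the number of connected components. -/
noncomputable def potential {V : Type} [Fintype V] (G : SimpleGraph V) : ℤ :=
  ∑ v, weight (deg G v) - 2 * (Nat.card G.ConnectedComponent : ℤ)

/-! ### Adding an edge: degrees -/

lemma addEdge_adj {V : Type} {G : SimpleGraph V} {u v a b : V} :
    (addEdge G u v).Adj a b ↔ G.Adj a b ∨ ((a = u ∧ b = v) ∨ (a = v ∧ b = u)) ∧ a ≠ b := by
  simp [addEdge, SimpleGraph.fromEdgeSet_adj]

lemma addEdge_comm {V : Type} (G : SimpleGraph V) (u v : V) : addEdge G u v = addEdge G v u := by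
  rw [addEdge, addEdge, Sym2.eq_swap]

lemma deg_addEdge_left {V : Type} [Fintype V] {G : SimpleGraph V} {u v : V} (hne : u ≠ v)
    (hadj : ¬ G.Adj u v) : deg (addEdge G u v) u = deg G u + 1 := by
  have h : (addEdge G u v).neighborSet u = insert v (G.neighborSet u) := by
    ext b
    simp only [SimpleGraph.mem_neighborSet, addEdge_adj, Set.mem_insert_iff]
    grind
  rw [deg, deg, h, Set.ncard_insert_of_notMem (by simpa using hadj) (Set.toFinite _)]

lemma deg_addEdge_right {V : Type} [Fintype V] {G : SimpleGraph V} {u v : V} (hne : u ≠ v)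
    (hadj : ¬ G.Adj u v) : deg (addEdge G u v) v = deg G v + 1 := by
  rw [addEdge_comm]
  exact deg_addEdge_left hne.symm fun h => hadj h.symm

lemma deg_addEdge_of_ne {V : Type} {G : SimpleGraph V} {u v a : V} (hu : a ≠ u) (hv : a ≠ v) :
    deg (addEdge G u v) a = deg G a := by
  have h : (addEdge G u v).neighborSet a = G.neighborSet a := by
    ext b
    simp [addEdge_adj, hu, hv]
  rw [deg, deg, h]

lemma weight_succ (d : ℕ) : weight (d + 1) = weight d - (if d = 0 then 0 else 1) := by
  rcases d with _ | d <;> simp [weight]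
  ring

lemma sum_weight_addEdge {V : Type} [Fintype V] {G : SimpleGraph V} {u v : V} (hne : u ≠ v)
    (hadj : ¬ G.Adj u v) :
    ∑ a, weight (deg (addEdge G u v) a) = ∑ a, weight (deg G a)
      - (if deg G u = 0 then 0 else 1) - (if deg G v = 0 then 0 else 1) := by
  classical
  have key : ∀ a, weight (deg (addEdge G u v) a) = weight (deg G a)
      - (if a = u then (if deg G u = 0 then 0 else 1) else 0)
      - (if a = v then (if deg G v = 0 then 0 else 1) else 0) := by
    intro a
    by_cases hu : a = u
    · subst hu
      rw [deg_addEdge_left hne hadj, weight_succ]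
      simp [hne]
    · by_cases hv : a = v
      · subst hv
        rw [deg_addEdge_right hne hadj, weight_succ]
        simp [hu]
      · simp [deg_addEdge_of_ne hu hv, hu, hv]
  simp only [key, Finset.sum_sub_distrib, Finset.sum_ite_eq', Finset.mem_univ, if_true]

lemma deg_pos_of_reachable {V : Type} [Fintype V] {G : SimpleGraph V} {a b : V}
    (h : G.Reachable a b) (hne : a ≠ b) : 0 < deg G a := by
  obtain ⟨c, hc⟩ := h.nonempty_neighborSet_left hne
  exact (Set.ncard_pos (Set.toFinite _)).2 ⟨c, hc⟩

/-! ### Adding an edge: connected components -/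

lemma le_addEdge {V : Type} (G : SimpleGraph V) (u v : V) : G ≤ addEdge G u v := le_sup_left

/-- A walk that uses the new edge `uv` starts and ends in the old components of `u` and `v`. -/
lemma reachable_addEdge {V : Type} {G : SimpleGraph V} {u v a b : V}
    (h : (addEdge G u v).Reachable a b) :
    G.Reachable a b ∨
      (G.Reachable a u ∨ G.Reachable a v) ∧ (G.Reachable b u ∨ G.Reachable b v) := by
  obtain ⟨p⟩ := h
  induction p with
  | nil => exact Or.inl (SimpleGraph.Reachable.refl _)
  | @cons a c b hac p ih =>
    rcases addEdge_adj.1 hac with hac | ⟨⟨rfl, rfl⟩ | ⟨rfl, rfl⟩, -⟩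
    · have hr := hac.reachable
      rcases ih with ih | ⟨ih | ih, ih'⟩
      · exact Or.inl (hr.trans ih)
      · exact Or.inr ⟨Or.inl (hr.trans ih), ih'⟩
      · exact Or.inr ⟨Or.inr (hr.trans ih), ih'⟩
    · rcases ih with ih | ⟨-, ih'⟩
      · exact Or.inr ⟨Or.inl .rfl, Or.inr ih.symm⟩
      · exact Or.inr ⟨Or.inl .rfl, ih'⟩
    · rcases ih with ih | ⟨-, ih'⟩
      · exact Or.inr ⟨Or.inr .rfl, Or.inl ih.symm⟩
      · exact Or.inr ⟨Or.inr .rfl, ih'⟩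

lemma card_components_addEdge_of_reachable {V : Type} [Fintype V] {G : SimpleGraph V} {u v : V}
    (h : G.Reachable u v) :
    Nat.card (addEdge G u v).ConnectedComponent = Nat.card G.ConnectedComponent := by
  refine (Nat.card_congr (Equiv.ofBijective
    (SimpleGraph.ConnectedComponent.map (SimpleGraph.Hom.ofLE (le_addEdge G u v)))
    ⟨?_, SimpleGraph.ConnectedComponent.surjective_map_ofLE _⟩)).symm
  intro c d
  refine SimpleGraph.ConnectedComponent.ind₂ (fun a b hab => ?_) c d
  have hab' : (addEdge G u v).Reachable a b := SimpleGraph.ConnectedComponent.exact hab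
  refine SimpleGraph.ConnectedComponent.sound ?_
  rcases reachable_addEdge hab' with hr | ⟨ha | ha, hb | hb⟩
  · exact hr
  · exact ha.trans hb.symm
  · exact ha.trans (h.trans hb.symm)
  · exact ha.trans (h.symm.trans hb.symm)
  · exact ha.trans hb.symm

lemma card_components_addEdge_lt {V : Type} [Fintype V] {G : SimpleGraph V} {u v : V}
    (hne : u ≠ v) (h : ¬ G.Reachable u v) :
    Nat.card (addEdge G u v).ConnectedComponent < Nat.card G.ConnectedComponent := by
  classical
  have : Fintype G.ConnectedComponent := Fintype.ofFinite _
  have : Fintype (addEdge G u v).ConnectedComponent := Fintype.ofFinite _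
  rw [Nat.card_eq_fintype_card, Nat.card_eq_fintype_card]
  refine Fintype.card_lt_of_surjective_not_injective
    (SimpleGraph.ConnectedComponent.map (SimpleGraph.Hom.ofLE (le_addEdge G u v)))
    (SimpleGraph.ConnectedComponent.surjective_map_ofLE _) fun hinj => h ?_
  refine SimpleGraph.ConnectedComponent.exact (hinj ?_)
  exact SimpleGraph.ConnectedComponent.sound
    (SimpleGraph.Adj.reachable (addEdge_adj.2 (Or.inr ⟨Or.inl ⟨rfl, rfl⟩, hne⟩)))

/-- Away from the component of `u`, distinct components stay distinct. -/
lemma card_components_le_addEdge {V : Type} [Fintype V] (G : SimpleGraph V) (u v : V) :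
    Nat.card G.ConnectedComponent ≤ Nat.card (addEdge G u v).ConnectedComponent + 1 := by
  classical
  have : Fintype G.ConnectedComponent := Fintype.ofFinite _
  have : Fintype (addEdge G u v).ConnectedComponent := Fintype.ofFinite _
  rw [Nat.card_eq_fintype_card, Nat.card_eq_fintype_card]
  have hle : (Finset.univ.erase (G.connectedComponentMk u)).card
      ≤ (Finset.univ : Finset (addEdge G u v).ConnectedComponent).card := by
    refine Finset.card_le_card_of_injOn
      (SimpleGraph.ConnectedComponent.map (SimpleGraph.Hom.ofLE (le_addEdge G u v)))
      (fun _ _ => Finset.mem_coe.2 (Finset.mem_univ _)) ?_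
    intro c hc d hd
    induction c using SimpleGraph.ConnectedComponent.ind with | _ a
    induction d using SimpleGraph.ConnectedComponent.ind with | _ b
    intro hab
    have hab' : (addEdge G u v).Reachable a b := SimpleGraph.ConnectedComponent.exact hab
    simp only [Finset.coe_erase, Set.mem_sdiff, Set.mem_singleton_iff,
      SimpleGraph.ConnectedComponent.eq] at hc hd
    refine SimpleGraph.ConnectedComponent.sound ?_
    rcases reachable_addEdge hab' with hr | ⟨ha | ha, hb | hb⟩
    · exact hr
    · exact absurd ha hc.2
    · exact absurd ha hc.2
    · exact absurd hb hd.2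
    · exact ha.trans hb.symm
  rw [Finset.card_erase_of_mem (Finset.mem_univ _), Finset.card_univ, Finset.card_univ] at hle
  omega

/-! ### The potential -/

/-- `F(C) + E(D)` in terms of the potential, which does not refer to `x`. -/
lemma Fdof_add_Edof {V : Type} [Fintype V] (G : SimpleGraph V) (x : V) (hx : 0 < deg G x) :
    Fdof G (G.connectedComponentMk x).supp
      + Edof G {v : V | v ∉ (G.connectedComponentMk x).supp ∧ 0 < deg G v} = potential G + 2 := by
  classical
  have : Fintype G.ConnectedComponent := Fintype.ofFinite _
  set D : Set V := {v : V | v ∉ (G.connectedComponentMk x).supp ∧ 0 < deg G v} with hD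
  -- The contribution of one component to the potential.
  let S : G.ConnectedComponent → ℤ := fun c =>
    ∑ v with G.connectedComponentMk v = c, weight (deg G v) - 2
  have hF : ∀ c : G.ConnectedComponent, (∀ v ∈ c.supp, 0 < deg G v) → Fdof G c.supp - 2 = S c := by
    intro c hc
    have : Fdof G c.supp = ∑ v with G.connectedComponentMk v = c, (3 - (deg G v : ℤ)) := by
      rw [Fdof, ← finsum_mem_coe_finset]
      refine finsum_mem_congr ?_ fun _ _ => rfl
      ext v
      simp [SimpleGraph.ConnectedComponent.mem_supp_iff]
    simp only [S, this]
    congr 1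
    refine Finset.sum_congr rfl fun v hv => ?_
    have := hc v (by simpa using hv)
    simp [weight, this.ne']
  have hiso : ∀ v, deg G v = 0 → S (G.connectedComponentMk v) = 0 := by
    intro v hv
    have : (Finset.univ.filter fun a => G.connectedComponentMk a = G.connectedComponentMk v)
        = {v} := by
      ext a
      simp only [Finset.mem_filter, Finset.mem_univ, true_and, Finset.mem_singleton,
        SimpleGraph.ConnectedComponent.eq]
      refine ⟨fun h => by_contra fun hne => ?_, fun h => h ▸ .rfl⟩
      exact (deg_pos_of_reachable h.symm (Ne.symm hne)).ne' hv
    change ∑ a with G.connectedComponentMk a = G.connectedComponentMk v, weight (deg G a) - 2 = 0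
    rw [this, Finset.sum_singleton, hv]
    rfl
  have hpos : ∀ v ∈ (G.connectedComponentMk x).supp, 0 < deg G v := by
    intro v hv
    by_cases hvx : v = x
    · exact hvx ▸ hx
    · exact deg_pos_of_reachable (SimpleGraph.ConnectedComponent.exact hv) hvx
  have hΨ : potential G = ∑ c, S c := by
    have hfib : ∑ c, ∑ v with G.connectedComponentMk v = c, weight (deg G v)
        = ∑ v, weight (deg G v) := Finset.sum_fiberwise _ _ _
    simp only [potential, S, Finset.sum_sub_distrib, Finset.sum_const, Finset.card_univ,
      hfib, Nat.card_eq_fintype_card]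
    simp [mul_comm]
  have hE : Edof G D = ∑ c with c.supp ⊆ D, S c := by
    rw [Edof, ← finsum_mem_coe_finset]
    refine finsum_mem_congr (by ext c; simp) fun c hc => hF c fun v hv => ?_
    have hcD : c.supp ⊆ D := by simpa using hc
    exact (hcD hv).2
  -- Components other than that of `x` not contained in `D` are isolated vertices.
  have hE' : ∑ c with c.supp ⊆ D, S c = ∑ c ∈ Finset.univ.erase (G.connectedComponentMk x), S c := by
    refine Finset.sum_subset ?_ ?_
    · intro c hc
      simp only [Finset.mem_filter, Finset.mem_univ, true_and] at hc
      refine Finset.mem_erase.2 ⟨?_, Finset.mem_univ _⟩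
      rintro rfl
      exact (hc (SimpleGraph.ConnectedComponent.mem_supp_iff _ _ |>.2 rfl : x ∈ _)).1 rfl
    · intro c hc hcD
      simp only [Finset.mem_filter, Finset.mem_univ, true_and] at hcD
      obtain ⟨v, hv, hvD⟩ := Set.not_subset.1 hcD
      obtain rfl : G.connectedComponentMk v = c := hv
      refine hiso v ?_
      by_contra h0
      exact hvD ⟨fun h => (Finset.mem_erase.1 hc).1 h, Nat.pos_of_ne_zero h0⟩
  have hsplit := Finset.add_sum_erase Finset.univ S (Finset.mem_univ (G.connectedComponentMk x))
  rw [hE, hE', hΨ, ← hsplit, ← hF _ hpos]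
  ring

/-- Let `G` have maximum degree at most 3, `x` a non-isolated vertex, `C` the component of
`x` and `D` the union of the other components containing an edge.  Let `G₁ = G + e₁` where
`e₁` joins two distinct non-adjacent vertices of `C` of degree ≤ 2, and `G₂ = G₁ + e₂` where
`e₂` joins two distinct non-adjacent vertices of degree ≤ 2 in `G₁`.  With `C₂, D₂` the
corresponding sets for `G₂`, we have `F(C₂) + E(D₂) ≤ F(C) + E(D)`, with equality iff both
endpoints of `e₂` are isolated in `G₁`. -/
theorem freedom_nonincreasing
    (V : Type) [Fintype V] (G : SimpleGraph V)
    (hdeg : ∀ v, deg G v ≤ 3) (x : V) (hx : 0 < deg G x)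
    (C : Set V) (hC : C = (G.connectedComponentMk x).supp)
    (D : Set V) (hD : D = {v : V | v ∉ C ∧ 0 < deg G v})
    (u₁ v₁ : V) (hu₁ : u₁ ∈ C) (hv₁ : v₁ ∈ C)
    (h₁ne : u₁ ≠ v₁) (h₁adj : ¬ G.Adj u₁ v₁)
    (h₁du : deg G u₁ ≤ 2) (h₁dv : deg G v₁ ≤ 2)
    (G₁ : SimpleGraph V) (hG₁ : G₁ = addEdge G u₁ v₁)
    (u₂ v₂ : V) (h₂ne : u₂ ≠ v₂) (h₂adj : ¬ G₁.Adj u₂ v₂)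
    (h₂du : deg G₁ u₂ ≤ 2) (h₂dv : deg G₁ v₂ ≤ 2)
    (G₂ : SimpleGraph V) (hG₂ : G₂ = addEdge G₁ u₂ v₂)
    (C₂ : Set V) (hC₂ : C₂ = (G₂.connectedComponentMk x).supp)
    (D₂ : Set V) (hD₂ : D₂ = {v : V | v ∉ C₂ ∧ 0 < deg G₂ v}) :
    Fdof G₂ C₂ + Edof G₂ D₂ ≤ Fdof G C + Edof G D ∧
    (Fdof G₂ C₂ + Edof G₂ D₂ = Fdof G C + Edof G D ↔
      deg G₁ u₂ = 0 ∧ deg G₁ v₂ = 0) := by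
  subst hC hD hC₂ hD₂
  have hr₁ : G.Reachable u₁ v₁ :=
    (SimpleGraph.ConnectedComponent.exact hu₁).trans (SimpleGraph.ConnectedComponent.exact hv₁).symm
  have hdu₁ := deg_pos_of_reachable hr₁ h₁ne
  have hdv₁ := deg_pos_of_reachable hr₁.symm h₁ne.symm
  have hmono : G ≤ G₂ := by
    rw [hG₂, hG₁]
    exact (le_addEdge _ _ _).trans (le_addEdge _ _ _)
  have hx₂ : 0 < deg G₂ x :=
    hx.trans_le (Set.ncard_le_ncard (fun _ h => hmono h) (Set.toFinite _))
  rw [Fdof_add_Edof G x hx, Fdof_add_Edof G₂ x hx₂]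
  have hs₁ := sum_weight_addEdge h₁ne h₁adj
  have hc₁ := card_components_addEdge_of_reachable hr₁
  rw [← hG₁] at hs₁ hc₁
  have hs₂ := sum_weight_addEdge h₂ne h₂adj
  have hc₂ := card_components_le_addEdge G₁ u₂ v₂
  have hlt : deg G₁ u₂ = 0 →
      Nat.card (addEdge G₁ u₂ v₂).ConnectedComponent < Nat.card G₁.ConnectedComponent :=
    fun h0 => card_components_addEdge_lt h₂ne fun h => (deg_pos_of_reachable h h₂ne).ne' h0
  rw [← hG₂] at hs₂ hc₂ hlt
  rw [if_neg hdu₁.ne', if_neg hdv₁.ne'] at hs₁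
  unfold potential
  zify at hc₁ hc₂ hlt
  by_cases h0 : deg G₁ u₂ = 0
  · have hlt' := Int.add_one_le_iff.2 (hlt (by exact_mod_cast h0))
    by_cases h0' : deg G₁ v₂ = 0
    · rw [if_pos h0, if_pos h0'] at hs₂
      refine ⟨by linarith, fun _ => ⟨h0, h0'⟩, fun _ => by linarith⟩
    · rw [if_pos h0, if_neg h0'] at hs₂
      refine ⟨by linarith, fun h => by linarith, fun h => absurd h.2 h0'⟩
  · have hs₂' : ∑ a, weight (deg G₂ a) ≤ ∑ a, weight (deg G₁ a) - 1 := by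
      rw [hs₂, if_neg h0]
      split_ifs <;> linarith
    refine ⟨by linarith, fun h => by linarith, fun h => absurd h.1 h0⟩
end
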